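/- Let φ be a conjunctive query with negation: φ = ∃x₁…∃xₖ ψ (k ≥ 1), where ψ is a finite conjunction of (i) positive atoms Rᵢ(t̄) whose arguments are variables among x₁,…,xₖ or natural-number constant symbols, (ii) negated atoms ¬Rᵢ(t̄) of the same shape, and (iii) comparisons (s op t) with op ∈ {=, ≠, <, ≤} and s, t variables or constants, and assume that every variable xⱼ occurs in at least one positive atom. Fix an injection sending each variable xⱼ to a distinct labeled null, and define the canonical c-instance I_φ by: T i = the set of tuples arising from the positive Rᵢ-atoms of ψ with each variable replaced by its labeled null, and Φ = the set of negated atoms and comparisons of ψ with each variable replaced by its labeled null. Then: (a) every ground instance K ∈ PWD(I_φ) satisfies φ; (b) I_φ is consistent if and only if some ground instance satisfies φ. Consequently, some ground instance satisfies φ if and only if I_φ is a c-instance satisfying φ. -/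

import Mathlib

/-! Mappings of the nulls restrict along `ν` to assignments of the variables, and since `ν` is
injective every assignment `α` is such a restriction `μ ∘ ν`. Evaluating a term under `μ ∘ ν` is the
same as replacing its variables by nulls and applying `μ` (`applyMap_termEntry`). Hence a mapping
satisfying the global condition gives an assignment making `φ` true in the world `μ(I_φ)`: positive
atoms hold by construction of the tables, and the global condition is the rest of the matrix.

Conversely, let `α` witness `φ` in some `K`, with `α = μ ∘ ν`. Every tuple of `μ(I_φ)` is a positive
atom evaluated under `α`, so `μ(I_φ) ⊆ K`; the negated atoms, false in `K`, are therefore false in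
the smaller instance `μ(I_φ)`, and comparisons do not depend on the instance. So `μ` satisfies the
global condition and `μ(I_φ)` is a possible world. -/

/-! Schema: an index set `ι` with arity function `a : ι → ℕ`; the domain of constants is
`ℕ`; `V` is a countably infinite type of labeled nulls (kept disjoint from the constants
by using the sum type `ℕ ⊕ V` for entries). -/

/-- A ground instance: for each `i : ι`, a finite set of `(a i)`-tuples of naturals. -/
structure GroundInstance (ι : Type) (a : ι → ℕ) where
  rel : ∀ i : ι, Set (Fin (a i) → ℕ)
  finite : ∀ i : ι, (rel i).Finite

/-- Comparison operators. -/
inductive CmpOp : Type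
  | eq | ne | lt | le

/-- Evaluation of a comparison operator on natural numbers. -/
def CmpOp.eval : CmpOp → ℕ → ℕ → Prop
  | .eq => Eq
  | .ne => Ne
  | .lt => (· < ·)
  | .le => (· ≤ ·)

/-- An atomic condition: a comparison `(u op v)` between constants/labeled nulls, or a
negated atom `¬Rᵢ(t̄)` with `t̄` an `(a i)`-tuple of constants and labeled nulls. -/
inductive AtomicCond (ι : Type) (a : ι → ℕ) (V : Type) : Type
  | cmp (op : CmpOp) (u v : ℕ ⊕ V)
  | negAtom (i : ι) (t : Fin (a i) → ℕ ⊕ V)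

/-- The labeled nulls occurring in an atomic condition. -/
def AtomicCond.nulls {ι : Type} {a : ι → ℕ} {V : Type} :
    AtomicCond ι a V → Set V
  | .cmp _ u v => {x | u = Sum.inr x ∨ v = Sum.inr x}
  | .negAtom _ t => {x | ∃ j, t j = Sum.inr x}

/-- A c-instance: for each `i : ι` a finite set `T i` of `(a i)`-tuples of constants and
labeled nulls, together with a finite global condition `gc`, every labeled null of which
occurs in some table. -/
structure CInstance (ι : Type) (a : ι → ℕ) (V : Type) where
  T : ∀ i : ι, Set (Fin (a i) → ℕ ⊕ V)
  T_finite : ∀ i : ι, (T i).Finite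
  gc : Set (AtomicCond ι a V)
  gc_finite : gc.Finite
  nulls_occur : ∀ c ∈ gc, ∀ x ∈ AtomicCond.nulls c, ∃ i, ∃ t ∈ T i, ∃ j, t j = Sum.inr x

/-- Extension of a mapping `μ : V → ℕ` to entries, fixing constants. -/
def applyMap {V : Type} (μ : V → ℕ) : ℕ ⊕ V → ℕ := Sum.elim id μ

/-- Entrywise extension of a mapping to tuples. -/
def applyMapTuple {V : Type} (μ : V → ℕ) {n : ℕ} (t : Fin n → ℕ ⊕ V) : Fin n → ℕ :=
  fun j => applyMap μ (t j)

/-- An atomic condition holds under a mapping `μ` (relative to the c-instance `I`). -/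
def AtomicCond.Holds {ι : Type} {a : ι → ℕ} {V : Type} (I : CInstance ι a V)
    (μ : V → ℕ) : AtomicCond ι a V → Prop
  | .cmp op u v => op.eval (applyMap μ u) (applyMap μ v)
  | .negAtom i t => applyMapTuple μ t ∉ applyMapTuple μ '' I.T i

/-- A mapping satisfies the global condition of a c-instance if every atomic condition
in it holds after substituting the mapping. -/
def MapSat {ι : Type} {a : ι → ℕ} {V : Type} (I : CInstance ι a V) (μ : V → ℕ) : Prop :=
  ∀ c ∈ I.gc, AtomicCond.Holds I μ c

/-- The possible worlds of a c-instance: all ground instances of the form `μ(I)` for a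
mapping `μ` satisfying the global condition. -/
def PWD {ι : Type} {a : ι → ℕ} {V : Type} (I : CInstance ι a V) :
    Set (GroundInstance ι a) :=
  {K | ∃ μ : V → ℕ, MapSat I μ ∧ ∀ i, K.rel i = applyMapTuple μ '' I.T i}

/-- A c-instance is consistent if it has at least one possible world. -/
def Consistent {ι : Type} {a : ι → ℕ} {V : Type} (I : CInstance ι a V) : Prop :=
  (PWD I).Nonempty

/-! ### Conjunctive queries with negation -/

/-- A term of a conjunctive query with `k` variables: a variable among `x₁,…,xₖ` or a
natural-number constant symbol. -/
abbrev QTerm (k : ℕ) := Fin k ⊕ ℕ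

/-- Evaluation of a term under an assignment `α` of the variables. -/
def QTerm.eval {k : ℕ} (α : Fin k → ℕ) : QTerm k → ℕ := Sum.elim α id

/-- A conjunctive query with negation `φ = ∃x₁…∃xₖ ψ` (`k ≥ 1`), where `ψ` is a finite
conjunction of positive atoms, negated atoms, and comparisons, whose arguments are
variables among `x₁,…,xₖ` or constants, such that every variable occurs in at least one
positive atom. -/
structure CQNeg (ι : Type) (a : ι → ℕ) where
  k : ℕ
  k_pos : 1 ≤ k
  pos : List ((i : ι) × (Fin (a i) → QTerm k))
  neg : List ((i : ι) × (Fin (a i) → QTerm k))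
  cmps : List (CmpOp × QTerm k × QTerm k)
  var_occurs : ∀ x : Fin k, ∃ p ∈ pos, ∃ j, p.2 j = Sum.inl x

/-- A ground instance `K` satisfies the conjunctive query with negation `φ`: some
assignment of the existentially quantified variables makes all the positive atoms,
negated atoms, and comparisons of the matrix of `φ` true in `K`. -/
def CQNeg.Sat {ι : Type} {a : ι → ℕ} (φ : CQNeg ι a) (K : GroundInstance ι a) : Prop :=
  ∃ α : Fin φ.k → ℕ,
    (∀ p ∈ φ.pos, (fun j => QTerm.eval α (p.2 j)) ∈ K.rel p.1) ∧
    (∀ q ∈ φ.neg, (fun j => QTerm.eval α (q.2 j)) ∉ K.rel q.1) ∧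
    (∀ c ∈ φ.cmps, CmpOp.eval c.1 (QTerm.eval α c.2.1) (QTerm.eval α c.2.2))

/-- Replace each variable by its labeled null (along the injection `ν`), keeping
constants. -/
def termEntry {V : Type} {k : ℕ} (ν : Fin k → V) : QTerm k → ℕ ⊕ V
  | Sum.inl x => Sum.inr (ν x)
  | Sum.inr c => Sum.inl c

theorem termEntry_eq_inr {V : Type} {k : ℕ} {ν : Fin k → V} {s : QTerm k} {x : V}
    (h : termEntry ν s = Sum.inr x) : ∃ y : Fin k, s = Sum.inl y ∧ ν y = x := by
  cases s with
  | inl y => exact ⟨y, rfl, by simpa [termEntry] using h⟩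
  | inr c => simp [termEntry] at h

/-- The tables of the canonical c-instance `I_φ`: the tuples arising from the positive
atoms of the matrix of `φ`, with each variable replaced by its labeled null. -/
def canonicalT {ι V : Type} {a : ι → ℕ} (φ : CQNeg ι a) (ν : Fin φ.k → V) (i : ι) :
    Set (Fin (a i) → ℕ ⊕ V) :=
  {t | ∃ s : Fin (a i) → QTerm φ.k,
    (⟨i, s⟩ : (i : ι) × (Fin (a i) → QTerm φ.k)) ∈ φ.pos ∧
    t = fun j => termEntry ν (s j)}

/-- The global condition of the canonical c-instance `I_φ`: the negated atoms and
comparisons of the matrix of `φ`, with each variable replaced by its labeled null. -/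
def canonicalGC {ι V : Type} {a : ι → ℕ} (φ : CQNeg ι a) (ν : Fin φ.k → V) :
    Set (AtomicCond ι a V) :=
  {c | (∃ q ∈ φ.neg, c = AtomicCond.negAtom q.1 fun j => termEntry ν (q.2 j)) ∨
       (∃ x ∈ φ.cmps, c = AtomicCond.cmp x.1 (termEntry ν x.2.1) (termEntry ν x.2.2))}

theorem canonicalT_finite {ι V : Type} {a : ι → ℕ} (φ : CQNeg ι a) (ν : Fin φ.k → V)
    (i : ι) : (canonicalT φ ν i).Finite := by
  have h1 : {s : Fin (a i) → QTerm φ.k |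
      (⟨i, s⟩ : (i : ι) × (Fin (a i) → QTerm φ.k)) ∈ φ.pos}.Finite :=
    (φ.pos.finite_toSet).preimage (Set.injOn_of_injective sigma_mk_injective)
  exact (h1.image fun s => fun j => termEntry ν (s j)).subset
    (fun t ⟨s, hs, ht⟩ => ⟨s, hs, ht.symm⟩)

theorem canonicalGC_finite {ι V : Type} {a : ι → ℕ} (φ : CQNeg ι a) (ν : Fin φ.k → V) :
    (canonicalGC φ ν).Finite := by
  have h1 := (φ.neg.finite_toSet).image
    (fun q : (i : ι) × (Fin (a i) → QTerm φ.k) =>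
      AtomicCond.negAtom (a := a) (V := V) q.1 fun j => termEntry ν (q.2 j))
  have h2 := (φ.cmps.finite_toSet).image
    (fun x : CmpOp × QTerm φ.k × QTerm φ.k =>
      AtomicCond.cmp (ι := ι) (a := a) x.1 (termEntry ν x.2.1) (termEntry ν x.2.2))
  refine (h1.union h2).subset ?_
  rintro c (⟨q, hq, rfl⟩ | ⟨x, hx, rfl⟩)
  · exact Or.inl ⟨q, hq, rfl⟩
  · exact Or.inr ⟨x, hx, rfl⟩

/-- The canonical c-instance `I_φ` of a conjunctive query with negation `φ`, relative to
an injection `ν` of the variables into the labeled nulls. -/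
def canonicalCInstance {ι V : Type} {a : ι → ℕ} (φ : CQNeg ι a) (ν : Fin φ.k → V) :
    CInstance ι a V where
  T := canonicalT φ ν
  T_finite := canonicalT_finite φ ν
  gc := canonicalGC φ ν
  gc_finite := canonicalGC_finite φ ν
  nulls_occur := by
    have key : ∀ x : V, (∃ s : QTerm φ.k, termEntry ν s = Sum.inr x) →
        ∃ i, ∃ t ∈ canonicalT φ ν i, ∃ j, t j = Sum.inr x := by
      rintro x ⟨s, hs⟩
      obtain ⟨y, -, rfl⟩ := termEntry_eq_inr hs
      obtain ⟨p, hp, j, hj⟩ := φ.var_occurs y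
      refine ⟨p.1, fun j => termEntry ν (p.2 j), ⟨p.2, by simpa using hp, rfl⟩, j, ?_⟩
      show termEntry ν (p.2 j) = Sum.inr (ν y)
      rw [hj]; rfl
    rintro c hc x hx
    rcases hc with ⟨q, hq, rfl⟩ | ⟨w, hw, rfl⟩
    · obtain ⟨j, hj⟩ := hx
      exact key x ⟨q.2 j, hj⟩
    · rcases hx with h | h
      · exact key x ⟨w.2.1, h⟩
      · exact key x ⟨w.2.2, h⟩

theorem applyMap_termEntry {V : Type} {k : ℕ} (ν : Fin k → V) (μ : V → ℕ) (s : QTerm k) :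
    applyMap μ (termEntry ν s) = QTerm.eval (μ ∘ ν) s := by
  cases s <;> rfl

theorem applyMapTuple_termEntry {V : Type} {k n : ℕ} (ν : Fin k → V) (μ : V → ℕ)
    (s : Fin n → QTerm k) :
    applyMapTuple μ (fun j => termEntry ν (s j)) = fun j => QTerm.eval (μ ∘ ν) (s j) :=
  funext fun j => applyMap_termEntry ν μ (s j)

theorem sat_of_mem_PWD {ι V : Type} {a : ι → ℕ} {φ : CQNeg ι a} {ν : Fin φ.k → V}
    {K : GroundInstance ι a} (hK : K ∈ PWD (canonicalCInstance φ ν)) : φ.Sat K := by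
  obtain ⟨μ, hμ, hrel⟩ := hK
  refine ⟨μ ∘ ν, fun p hp => ?_, fun q hq => ?_, fun c hc => ?_⟩
  · rw [hrel, ← applyMapTuple_termEntry]
    exact Set.mem_image_of_mem _ ⟨p.2, hp, rfl⟩
  · rw [hrel, ← applyMapTuple_termEntry]
    exact hμ _ (Or.inl ⟨q, hq, rfl⟩)
  · rw [← applyMap_termEntry, ← applyMap_termEntry]
    exact hμ _ (Or.inr ⟨c, hc, rfl⟩)

theorem consistent_of_sat {ι V : Type} {a : ι → ℕ} {φ : CQNeg ι a} {ν : Fin φ.k → V}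
    (hν : Function.Injective ν) {K : GroundInstance ι a} (hK : φ.Sat K) :
    Consistent (canonicalCInstance φ ν) := by
  obtain ⟨α, hpos, hneg, hcmp⟩ := hK
  obtain ⟨μ, rfl⟩ : ∃ μ : V → ℕ, μ ∘ ν = α := hν.surjective_comp_right α
  have hsub : ∀ i, applyMapTuple μ '' canonicalT φ ν i ⊆ K.rel i := by
    rintro i _ ⟨_, ⟨s, hs, rfl⟩, rfl⟩
    rw [applyMapTuple_termEntry]
    exact hpos ⟨i, s⟩ hs
  refine ⟨⟨fun i => applyMapTuple μ '' canonicalT φ ν i,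
    fun i => (canonicalT_finite φ ν i).image _⟩, μ, ?_, fun _ => rfl⟩
  rintro _ (⟨q, hq, rfl⟩ | ⟨c, hc, rfl⟩)
  · intro h
    have h' := hsub q.1 h
    rw [applyMapTuple_termEntry] at h'
    exact hneg q hq h'
  · change CmpOp.eval _ (applyMap μ _) (applyMap μ _)
    rw [applyMap_termEntry, applyMap_termEntry]
    exact hcmp c hc

/-- For a conjunctive query with negation `φ` and an injection `ν` from its
variables to labeled nulls, the canonical c-instance `I_φ` satisfies: (a) every ground
instance in `PWD(I_φ)` satisfies `φ`; (b) `I_φ` is consistent iff some ground instance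
satisfies `φ`; consequently, some ground instance satisfies `φ` iff `I_φ` is a
c-instance satisfying `φ` (consistent, with all possible worlds satisfying `φ`). -/
theorem canonical_cinstance_spec
    (ι : Type) [Finite ι] (a : ι → ℕ) (V : Type) [Countable V] [Infinite V]
    (φ : CQNeg ι a) (ν : Fin φ.k → V) (hν : Function.Injective ν) :
    (∀ K ∈ PWD (canonicalCInstance φ ν), φ.Sat K) ∧
    (Consistent (canonicalCInstance φ ν) ↔ ∃ K : GroundInstance ι a, φ.Sat K) ∧
    ((∃ K : GroundInstance ι a, φ.Sat K) ↔
      (Consistent (canonicalCInstance φ ν) ∧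
        ∀ K ∈ PWD (canonicalCInstance φ ν), φ.Sat K)) := by
  have hb : Consistent (canonicalCInstance φ ν) ↔ ∃ K : GroundInstance ι a, φ.Sat K :=
    ⟨fun ⟨K, hK⟩ => ⟨K, sat_of_mem_PWD hK⟩, fun ⟨_, hK⟩ => consistent_of_sat hν hK⟩
  exact ⟨fun _ => sat_of_mem_PWD, hb,
    fun h => ⟨hb.mpr h, fun _ => sat_of_mem_PWD⟩, fun h => hb.mp h.1⟩
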